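/- arXiv:2003.01533 — 2 statements merged into one kernel-verified Lean document; each statement's English description precedes it below -/
import Mathlib

section
/- Let K_B ∈ ℂ^{N×L_B} have full column rank, let K_E ∈ ℂ^{N×L_E} be arbitrary, and let σ² > 0. Define K_B⁺ := (K_Bᴴ K_B)^{−1} K_Bᴴ (the Moore–Penrose inverse of K_B), P_B := I_N − K_B K_B⁺ (the orthogonal projector onto the orthogonal complement of range(K_B)), and R_dd := K_E K_Eᴴ + σ² I_N. Then trace[ (K_Bᴴ R_dd^{−1} K_B)^{−1} ] = σ² · trace[ (K_Bᴴ K_B)^{−1} ] + σ² · trace[ K_B⁺ K_E ( K_Eᴴ P_B K_E + σ² I_{L_E} )^{−1} K_Eᴴ (K_B⁺)ᴴ ]. -/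
open Matrix

/-!
The argument is the Woodbury identity, used twice. Applied to `R_dd = K_E K_Eᴴ + σ² I` it gives
`σ² R_dd⁻¹ = I - K_E D⁻¹ K_Eᴴ` with `D = K_Eᴴ K_E + σ² I`, so that `σ² K_Bᴴ R_dd⁻¹ K_B` is the
Schur complement `K_Bᴴ K_B - (K_Bᴴ K_E) D⁻¹ (K_Eᴴ K_B)`. Inverting this by Woodbury again produces
the opposite Schur complement `D - (K_Eᴴ K_B) (K_Bᴴ K_B)⁻¹ (K_Bᴴ K_E)`, which is
`K_Eᴴ P_B K_E + σ² I`. All the inverses exist because the matrices involved are positive definite.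
-/

section CommRing

variable {R l m n : Type*} [CommRing R] [Fintype l] [DecidableEq l] [Fintype m] [DecidableEq m]
  [Fintype n] [DecidableEq n]

theorem smul_inv_mul_add_smul_one (U : Matrix n m R) (V : Matrix m n R) (s : R)
    (hUV : IsUnit (U * V + s • 1)) (hVU : IsUnit (V * U + s • 1)) :
    s • (U * V + s • 1)⁻¹ = 1 - U * (V * U + s • 1)⁻¹ * V := by
  rw [isUnit_iff_isUnit_det] at hUV hVU
  have push_through : (U * V + s • 1) * U = U * (V * U + s • 1) := by
    simp [Matrix.add_mul, Matrix.mul_add, Matrix.mul_assoc]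
  have mul_eq_smul_one : (U * V + s • 1) * (1 - U * (V * U + s • 1)⁻¹ * V) = s • 1 :=
    calc (U * V + s • 1) * (1 - U * (V * U + s • 1)⁻¹ * V)
      _ = U * V + s • 1 - U * ((V * U + s • 1) * (V * U + s • 1)⁻¹) * V := by
        rw [Matrix.mul_sub, Matrix.mul_one, ← Matrix.mul_assoc, ← Matrix.mul_assoc,
          push_through, Matrix.mul_assoc U]
      _ = s • 1 := by rw [mul_nonsing_inv _ hVU, Matrix.mul_one, add_sub_cancel_left]
  rw [← nonsing_inv_mul_cancel_left _ (1 - _) hUV, mul_eq_smul_one, Matrix.mul_smul,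
    Matrix.mul_one]

theorem sub_mul_inv_mul_mul_inv_add_eq_one {A : Matrix l l R} (B : Matrix l m R)
    (C : Matrix m l R) {D : Matrix m m R} (hA : IsUnit A) (hD : IsUnit D)
    (hS : IsUnit (D - C * A⁻¹ * B)) :
    (A - B * D⁻¹ * C) * (A⁻¹ + A⁻¹ * B * (D - C * A⁻¹ * B)⁻¹ * C * A⁻¹) = 1 := by
  obtain ⟨_⟩ := hA.nonempty_invertible
  obtain ⟨_⟩ := hD.nonempty_invertible
  have schur_eq : ⅟(⅟D) + C * ⅟A * (-B) = D - C * A⁻¹ * B := by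
    simp [sub_eq_add_neg]
  have : Invertible (⅟(⅟D) + C * ⅟A * (-B)) := (schur_eq ▸ hS).invertible
  have woodbury := add_mul_mul_invOf_mul_eq_one A (-B) (⅟D) C
  simp only [invOf_eq_nonsing_inv (⅟(⅟D) + C * ⅟A * (-B)), schur_eq] at woodbury
  simpa [sub_eq_add_neg] using woodbury

theorem inv_mul_inv_mul_add_smul_one_mul (K : Matrix n l R) (L : Matrix l n R)
    (U : Matrix n m R) (V : Matrix m n R) (s : R) (hLK : IsUnit (L * K))
    (hUV : IsUnit (U * V + s • 1)) (hVU : IsUnit (V * U + s • 1))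
    (hS : IsUnit (V * (1 - K * ((L * K)⁻¹ * L)) * U + s • 1)) :
    (L * (U * V + s • 1)⁻¹ * K)⁻¹ =
      s • ((L * K)⁻¹ + (L * K)⁻¹ * L * U * (V * (1 - K * ((L * K)⁻¹ * L)) * U + s • 1)⁻¹ *
        V * (K * (L * K)⁻¹)) := by
  have schur_eq : V * (1 - K * ((L * K)⁻¹ * L)) * U + s • 1 =
      V * U + s • 1 - V * K * (L * K)⁻¹ * (L * U) := by
    simp only [Matrix.mul_sub, Matrix.sub_mul, Matrix.mul_one, Matrix.mul_assoc]
    abel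
  have smul_eq_schur : s • (L * (U * V + s • 1)⁻¹ * K) =
      L * K - L * U * (V * U + s • 1)⁻¹ * (V * K) := by
    rw [← Matrix.smul_mul, ← Matrix.mul_smul, smul_inv_mul_add_smul_one U V s hUV hVU]
    simp only [Matrix.mul_sub, Matrix.sub_mul, Matrix.mul_one, Matrix.mul_assoc]
  rw [schur_eq] at hS ⊢
  apply inv_eq_right_inv
  rw [Matrix.mul_smul, ← Matrix.smul_mul, smul_eq_schur]
  simpa only [Matrix.mul_assoc] using
    sub_mul_inv_mul_mul_inv_add_eq_one (L * U) (V * K) hLK hVU hS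

end CommRing

section LeftPinv

variable {R l n : Type*} [CommRing R] [StarRing R] [Fintype l] [DecidableEq l] [Fintype n]

/-- The matrix `K⁺ = (Kᴴ K)⁻¹ Kᴴ`, which is the Moore–Penrose inverse of `K` when the Gram matrix
`Kᴴ K` is invertible, that is, over `ℝ` or `ℂ`, when `K` has full column rank. It is `0` when the
Gram matrix is singular, because `⁻¹` is then `0`. -/
noncomputable def leftPinv (K : Matrix n l R) : Matrix l n R := (Kᴴ * K)⁻¹ * Kᴴ

theorem conjTranspose_leftPinv (K : Matrix n l R) : (leftPinv K)ᴴ = K * (Kᴴ * K)⁻¹ := by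
  simp [leftPinv, conjTranspose_nonsing_inv]

theorem leftPinv_mul_self {K : Matrix n l R} (hK : IsUnit (Kᴴ * K)) : leftPinv K * K = 1 := by
  rw [leftPinv, Matrix.mul_assoc, nonsing_inv_mul _ ((isUnit_iff_isUnit_det _).mp hK)]

theorem isStarProjection_mul_leftPinv {K : Matrix n l R} (hK : IsUnit (Kᴴ * K)) :
    IsStarProjection (K * leftPinv K) where
  isIdempotentElem := by
    rw [IsIdempotentElem, Matrix.mul_assoc, ← Matrix.mul_assoc (leftPinv K),
      leftPinv_mul_self hK, Matrix.one_mul]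
  isSelfAdjoint := by
    rw [IsSelfAdjoint, star_eq_conjTranspose, conjTranspose_mul, conjTranspose_leftPinv,
      leftPinv, Matrix.mul_assoc]

end LeftPinv

theorem mulVec_injective_of_rank_eq_card {K m n : Type*} [Field K] [Fintype n]
    {A : Matrix m n K} (hA : A.rank = Fintype.card n) : Function.Injective A.mulVec := by
  rw [mulVec_injective_iff, linearIndependent_iff_card_eq_finrank_span, Set.finrank,
    ← rank_eq_finrank_span_cols, hA]

section RCLike

open scoped ComplexOrder MatrixOrder

variable {𝕜 l m n : Type*} [RCLike 𝕜] [Fintype l] [DecidableEq l] [Fintype m] [DecidableEq m]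
  [Fintype n]

theorem isUnit_conjTranspose_mul_self_of_rank_eq_card {K : Matrix n l 𝕜}
    (hK : K.rank = Fintype.card l) : IsUnit (Kᴴ * K) :=
  (PosDef.conjTranspose_mul_self K (mulVec_injective_of_rank_eq_card hK)).isUnit

variable [DecidableEq n]

theorem isUnit_add_smul_one_of_posSemidef {A : Matrix n n 𝕜} (hA : A.PosSemidef) {s : 𝕜}
    (hs : 0 < s) : IsUnit (A + s • 1) :=
  (PosDef.posSemidef_add hA (PosDef.one.smul hs)).isUnit

theorem posSemidef_one_sub_mul_leftPinv {K : Matrix n l 𝕜} (hK : IsUnit (Kᴴ * K)) :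
    (1 - K * leftPinv K).PosSemidef :=
  (isStarProjection_mul_leftPinv hK).one_sub.nonneg.posSemidef

theorem mle_bmse_decomposition_general {K : Matrix n l 𝕜} (hK : K.rank = Fintype.card l)
    (E : Matrix n m 𝕜) {s : 𝕜} (hs : 0 < s) :
    (Kᴴ * (E * Eᴴ + s • 1)⁻¹ * K)⁻¹ =
      s • (Kᴴ * K)⁻¹ +
      s • (leftPinv K * E * (Eᴴ * (1 - K * leftPinv K) * E + s • 1)⁻¹ * Eᴴ * (leftPinv K)ᴴ) := by
  have gram_isUnit := isUnit_conjTranspose_mul_self_of_rank_eq_card hK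
  have outer_isUnit := isUnit_add_smul_one_of_posSemidef (posSemidef_self_mul_conjTranspose E) hs
  have inner_isUnit := isUnit_add_smul_one_of_posSemidef (posSemidef_conjTranspose_mul_self E) hs
  have schur_isUnit := isUnit_add_smul_one_of_posSemidef
    ((posSemidef_one_sub_mul_leftPinv gram_isUnit).conjTranspose_mul_mul_same E) hs
  rw [conjTranspose_leftPinv, ← smul_add]
  exact inv_mul_inv_mul_add_smul_one_mul K Kᴴ E Eᴴ s gram_isUnit outer_isUnit inner_isUnit
    schur_isUnit

end RCLike

/-- **Decomposition of the MLE Bayesian MSE (proof of Lemma 2).**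
Let `K_B ∈ ℂ^{N×L_B}` have full column rank, `K_E ∈ ℂ^{N×L_E}` arbitrary and
`σ² > 0`.  With `K_B⁺ := (K_Bᴴ K_B)⁻¹ K_Bᴴ`, `P_B := I_N − K_B K_B⁺` and
`R_dd := K_E K_Eᴴ + σ² I_N`, one has
`trace[(K_Bᴴ R_dd⁻¹ K_B)⁻¹]
  = σ² trace[(K_Bᴴ K_B)⁻¹]
    + σ² trace[K_B⁺ K_E (K_Eᴴ P_B K_E + σ² I_{L_E})⁻¹ K_Eᴴ (K_B⁺)ᴴ]`. -/
theorem mle_bmse_decomposition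
    (N LB LE : ℕ) (KB : Matrix (Fin N) (Fin LB) ℂ) (hrankB : KB.rank = LB)
    (KE : Matrix (Fin N) (Fin LE) ℂ) (σ2 : ℝ) (hσ2 : 0 < σ2)
    (KBp : Matrix (Fin LB) (Fin N) ℂ) (hKBp : KBp = (KBᴴ * KB)⁻¹ * KBᴴ)
    (PB : Matrix (Fin N) (Fin N) ℂ)
    (hPB : PB = (1 : Matrix (Fin N) (Fin N) ℂ) - KB * KBp)
    (Rdd : Matrix (Fin N) (Fin N) ℂ)
    (hRdd : Rdd = KE * KEᴴ + (σ2 : ℂ) • (1 : Matrix (Fin N) (Fin N) ℂ)) :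
    Matrix.trace ((KBᴴ * Rdd⁻¹ * KB)⁻¹) =
      (σ2 : ℂ) * Matrix.trace ((KBᴴ * KB)⁻¹) +
      (σ2 : ℂ) *
        Matrix.trace
          (KBp * KE *
            (KEᴴ * PB * KE + (σ2 : ℂ) • (1 : Matrix (Fin LE) (Fin LE) ℂ))⁻¹ *
            KEᴴ * KBpᴴ) := by
  subst hKBp hPB hRdd
  rw [← leftPinv, mle_bmse_decomposition_general (by simpa using hrankB) KE
    (Complex.zero_lt_real.mpr hσ2), trace_add, trace_smul, trace_smul, smul_eq_mul, smul_eq_mul]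
end

section
/- Let K_B ∈ ℂ^{N×L_B} have full column rank, let K_E ∈ ℂ^{N×L_E} satisfy range(K_E) ⊆ range(K_B), and set K_B⁺ := (K_Bᴴ K_B)^{−1} K_Bᴴ. Then lim_{σ²→0⁺} trace[ (K_Bᴴ (K_E K_Eᴴ + σ² I_N)^{−1} K_B)^{−1} ] = trace[ K_B⁺ K_E K_Eᴴ (K_B⁺)ᴴ ], and this limit is strictly positive whenever K_E ≠ 0. -/
open Matrix Filter Topology

/-!
Full column rank makes `P = (K_Bᴴ K_B)⁻¹ K_Bᴴ` a left inverse of `K_B`, and `range K_E ⊆ range K_B`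
says that `K_B P` fixes `K_E`.  Hence `K_E K_Eᴴ = K_B G K_Bᴴ` with `G = P K_E K_Eᴴ Pᴴ`, and
multiplying `S = K_B G K_Bᴴ + σ² I` by `K_B (K_Bᴴ K_B)⁻¹` shows that
`(K_Bᴴ S⁻¹ K_B)⁻¹ = G + σ² (K_Bᴴ K_B)⁻¹` exactly.  This is affine in `σ²`, so its limit at `0` is
its constant term `G = (P K_E) (P K_E)ᴴ`, whose trace vanishes only if `P K_E = 0`, that is, only if
`K_E = K_B P K_E = 0`.
-/

open scoped ComplexOrder

theorem mul_leftInverse_mul_of_range_le {R n p q : Type*} [CommSemiring R] [Fintype n] [Fintype p]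
    [Fintype q] [DecidableEq p] {A : Matrix n p R} {L : Matrix p n R} {B : Matrix n q R}
    (hL : L * A = 1) (hrange : LinearMap.range B.mulVecLin ≤ LinearMap.range A.mulVecLin) :
    A * (L * B) = B := by
  classical
  refine ext_of_mulVec_single fun j => ?_
  obtain ⟨w, hw : A *ᵥ w = B *ᵥ Pi.single j 1⟩ := hrange ⟨Pi.single j 1, rfl⟩
  calc (A * (L * B)) *ᵥ Pi.single j 1
      = A *ᵥ (L *ᵥ (B *ᵥ Pi.single j 1)) := by simp only [mulVec_mulVec]
    _ = A *ᵥ ((L * A) *ᵥ w) := by rw [← hw, mulVec_mulVec w L A]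
    _ = B *ᵥ Pi.single j 1 := by rw [hL, one_mulVec, hw]

theorem inv_mul_inv_add_smul_one_mul {R n p : Type*} [CommRing R] [Fintype n] [Fintype p]
    [DecidableEq n] [DecidableEq p] {A : Matrix n p R} {C : Matrix p n R} (G : Matrix p p R) {s : R}
    (hCA : IsUnit (C * A)) (hS : IsUnit (A * G * C + s • (1 : Matrix n n R))) :
    (C * (A * G * C + s • (1 : Matrix n n R))⁻¹ * A)⁻¹ = G + s • (C * A)⁻¹ := by
  set S := A * G * C + s • (1 : Matrix n n R) with S_def
  rw [isUnit_iff_isUnit_det] at hCA hS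
  have intertwine : S * (A * (C * A)⁻¹) = A * (G + s • (C * A)⁻¹) :=
    calc S * (A * (C * A)⁻¹)
        = A * G * (C * A * (C * A)⁻¹) + s • (A * (C * A)⁻¹) := by
          simp only [S_def, Matrix.add_mul, Matrix.smul_mul, Matrix.one_mul, Matrix.mul_assoc]
      _ = A * (G + s • (C * A)⁻¹) := by
          rw [mul_nonsing_inv _ hCA, Matrix.mul_one, Matrix.mul_add, Matrix.mul_smul]
  refine inv_eq_right_inv ?_
  calc C * S⁻¹ * A * (G + s • (C * A)⁻¹)
      = C * (S⁻¹ * (S * (A * (C * A)⁻¹))) := by rw [intertwine]; simp only [Matrix.mul_assoc]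
    _ = C * A * (C * A)⁻¹ := by rw [nonsing_inv_mul_cancel_left _ _ hS, Matrix.mul_assoc]
    _ = 1 := mul_nonsing_inv _ hCA

section StarRing

variable {R n p q : Type*} [CommRing R] [StarRing R] [Fintype n] [Fintype p] [DecidableEq p]

/-- The Moore–Penrose inverse `(Aᴴ A)⁻¹ Aᴴ` of a matrix `A` of full column rank.  Where `Aᴴ A`
is not invertible, the formula returns `0`. -/
noncomputable def colPinv (A : Matrix n p R) : Matrix p n R :=
  (Aᴴ * A)⁻¹ * Aᴴ

theorem colPinv_mul_self {A : Matrix n p R} (hA : IsUnit (Aᴴ * A)) : colPinv A * A = 1 := by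
  rw [colPinv, Matrix.mul_assoc, nonsing_inv_mul _ ((isUnit_iff_isUnit_det _).mp hA)]

variable [Fintype q] [DecidableEq n]

/-- The error covariance `(Aᴴ (B Bᴴ + s I)⁻¹ A)⁻¹` of the maximum likelihood estimator of a channel
seen through `A`, under interference of covariance `B Bᴴ` and white noise of variance `s`. -/
noncomputable def mleErrorCov (A : Matrix n p R) (B : Matrix n q R) (s : R) : Matrix p p R :=
  (Aᴴ * (B * Bᴴ + s • (1 : Matrix n n R))⁻¹ * A)⁻¹

theorem mleErrorCov_eq_add_smul {A : Matrix n p R} {B : Matrix n q R} {s : R}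
    (hA : IsUnit (Aᴴ * A)) (hrange : LinearMap.range B.mulVecLin ≤ LinearMap.range A.mulVecLin)
    (hS : IsUnit (B * Bᴴ + s • (1 : Matrix n n R))) :
    mleErrorCov A B s = colPinv A * B * (colPinv A * B)ᴴ + s • (Aᴴ * A)⁻¹ := by
  have factor : B * Bᴴ = A * (colPinv A * B * (colPinv A * B)ᴴ) * Aᴴ :=
    calc B * Bᴴ = A * (colPinv A * B) * (A * (colPinv A * B))ᴴ := by
          rw [mul_leftInverse_mul_of_range_le (colPinv_mul_self hA) hrange]
      _ = A * (colPinv A * B * (colPinv A * B)ᴴ) * Aᴴ := by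
          rw [conjTranspose_mul A]; simp only [Matrix.mul_assoc]
  rw [factor] at hS
  rw [mleErrorCov, factor, inv_mul_inv_add_smul_one_mul _ hA hS]

end StarRing

theorem isUnit_of_rank_eq_card {K p : Type*} [Field K] [Fintype p] [DecidableEq p]
    {A : Matrix p p K} (hA : A.rank = Fintype.card p) : IsUnit A := by
  rw [← linearIndependent_cols_iff_isUnit, linearIndependent_iff_card_eq_finrank_span,
    Set.finrank, ← rank_eq_finrank_span_cols, hA]

theorem isUnit_conjTranspose_mul_self_of_rank_eq_card_s10 {K n p : Type*} [Field K] [PartialOrder K]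
    [StarRing K] [StarOrderedRing K] [Fintype n] [Fintype p] [DecidableEq p] {A : Matrix n p K}
    (hA : A.rank = Fintype.card p) : IsUnit (Aᴴ * A) :=
  isUnit_of_rank_eq_card ((rank_conjTranspose_mul_self A).trans hA)

theorem posDef_mul_conjTranspose_add_smul_one {K n q : Type*} [Field K] [PartialOrder K]
    [StarRing K] [StarOrderedRing K] [Finite n] [Fintype q] [DecidableEq n] (B : Matrix n q K)
    {s : K} (hs : 0 < s) : (B * Bᴴ + s • (1 : Matrix n n K)).PosDef :=
  PosDef.posSemidef_add (posSemidef_self_mul_conjTranspose B) (PosDef.one.smul hs)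

theorem trace_mul_conjTranspose_self_pos {R n p : Type*} [Ring R] [PartialOrder R] [StarRing R]
    [StarOrderedRing R] [NoZeroDivisors R] [Fintype n] [Fintype p] {A : Matrix n p R}
    (hA : A ≠ 0) : 0 < (A * Aᴴ).trace :=
  (posSemidef_self_mul_conjTranspose A).trace_nonneg.lt_of_ne'
    (mt trace_mul_conjTranspose_self_eq_zero_iff.mp hA)

section RCLike

variable {𝕜 n p q : Type*} [RCLike 𝕜] [Fintype n] [Fintype p] [Fintype q]
  [DecidableEq n] [DecidableEq p]

theorem tendsto_mleErrorCov {A : Matrix n p 𝕜} {B : Matrix n q 𝕜} (hA : IsUnit (Aᴴ * A))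
    (hrange : LinearMap.range B.mulVecLin ≤ LinearMap.range A.mulVecLin) :
    Tendsto (fun s : ℝ => mleErrorCov A B (s : 𝕜)) (𝓝[>] 0)
      (𝓝 (colPinv A * B * (colPinv A * B)ᴴ)) := by
  set G := colPinv A * B * (colPinv A * B)ᴴ
  have affine : Continuous fun s : ℝ => G + (s : 𝕜) • (Aᴴ * A)⁻¹ := by fun_prop
  have limit : Tendsto (fun s : ℝ => G + (s : 𝕜) • (Aᴴ * A)⁻¹) (𝓝[>] 0) (𝓝 G) :=
    (affine.tendsto' 0 G (by simp)).mono_left nhdsWithin_le_nhds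
  refine limit.congr' ?_
  filter_upwards [self_mem_nhdsWithin] with s hs
  exact (mleErrorCov_eq_add_smul hA hrange
    (posDef_mul_conjTranspose_add_smul_one B (RCLike.ofReal_pos.mpr hs)).isUnit).symm

theorem mle_error_floor_general (A : Matrix n p 𝕜) (hrank : A.rank = Fintype.card p)
    (B : Matrix n q 𝕜)
    (hrange : LinearMap.range B.mulVecLin ≤ LinearMap.range A.mulVecLin) :
    Tendsto (fun s : ℝ => (mleErrorCov A B (s : 𝕜)).trace) (𝓝[>] 0)
      (𝓝 (colPinv A * B * Bᴴ * (colPinv A)ᴴ).trace) ∧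
    (B ≠ 0 → 0 < (colPinv A * B * Bᴴ * (colPinv A)ᴴ).trace) := by
  have hA : IsUnit (Aᴴ * A) := isUnit_conjTranspose_mul_self_of_rank_eq_card_s10 hrank
  have gram : colPinv A * B * Bᴴ * (colPinv A)ᴴ = colPinv A * B * (colPinv A * B)ᴴ := by
    rw [conjTranspose_mul, Matrix.mul_assoc]
  rw [gram]
  refine ⟨(continuous_id.matrix_trace.tendsto _).comp (tendsto_mleErrorCov hA hrange),
    fun hB => trace_mul_conjTranspose_self_pos fun h => hB ?_⟩
  rw [← mul_leftInverse_mul_of_range_le (colPinv_mul_self hA) hrange, h, Matrix.mul_zero]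

end RCLike

/-- **MLE error floor when the spoofing subspace is contained in the legitimate
subspace.**  Let `K_B ∈ ℂ^{N×L_B}` have full column rank, let
`K_E ∈ ℂ^{N×L_E}` satisfy `range(K_E) ⊆ range(K_B)`, and set
`K_B⁺ := (K_Bᴴ K_B)⁻¹ K_Bᴴ`.  Then
`trace[(K_Bᴴ (K_E K_Eᴴ + σ² I_N)⁻¹ K_B)⁻¹] → trace[K_B⁺ K_E K_Eᴴ (K_B⁺)ᴴ]`
as `σ² → 0⁺`, and this limit is a strictly positive real number whenever
`K_E ≠ 0`. -/
theorem mle_error_floor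
    (N LB LE : ℕ) (KB : Matrix (Fin N) (Fin LB) ℂ) (hrankB : KB.rank = LB)
    (KE : Matrix (Fin N) (Fin LE) ℂ)
    (hrange : LinearMap.range KE.mulVecLin ≤ LinearMap.range KB.mulVecLin)
    (KBp : Matrix (Fin LB) (Fin N) ℂ) (hKBp : KBp = (KBᴴ * KB)⁻¹ * KBᴴ) :
    Tendsto
      (fun σ2 : ℝ =>
        Matrix.trace
          ((KBᴴ * (KE * KEᴴ + (σ2 : ℂ) • (1 : Matrix (Fin N) (Fin N) ℂ))⁻¹ * KB)⁻¹))
      (𝓝[>] 0) (𝓝 (Matrix.trace (KBp * KE * KEᴴ * KBpᴴ))) ∧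
    (KE ≠ 0 →
      (Matrix.trace (KBp * KE * KEᴴ * KBpᴴ)).im = 0 ∧
      0 < (Matrix.trace (KBp * KE * KEᴴ * KBpᴴ)).re) := by
  obtain rfl : KBp = colPinv KB := hKBp
  exact (mle_error_floor_general KB (by simpa using hrankB) KE hrange).imp_right
    fun pos hKE => (Complex.pos_iff.mp (pos hKE)).symm.imp_left Eq.symm
end
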